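/- There exists an absolute constant C such that: for every connected finite undirected unweighted simple graph G on n vertices and m edges, every real ε with 0 < ε ≤ 1, and every positive integer R, there exists a finite collection B of pairs (c, r), where c is a vertex of G and r is a positive integer, satisfying: (1) for every (c, r) ∈ B, R ≤ r ≤ 2^(10/ε) · R; (2) every vertex of G lies in ball_G(c, r) for some (c, r) ∈ B; (3) Σ_{(c,r)∈B} |ball_G(c, r/2)| ≤ C · n / ε; (4) for every (c, r) ∈ B, |ball_G(c, 4r)| ≤ n^ε · |ball_G(c, r/2)|; (5) Σ_{(c,r)∈B} vol_G(ball_G(c, 4r)) ≤ C · m · n^ε / ε. -/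

import Mathlib

/-- The ball of radius `r` (a natural number) around `c` in the graph `G`:
all vertices at shortest-path distance at most `r` from `c`. -/
def gball {V : Type} (G : SimpleGraph V) (c : V) (r : ℕ) : Set V :=
  {v | G.edist c v ≤ (r : ℕ∞)}

/-- The volume of a set of vertices: the sum of the degrees of its members. -/
noncomputable def gvol {V : Type} [Fintype V] (G : SimpleGraph V) (S : Set V) : ℕ :=
  ∑ v ∈ S.toFinite.toFinset, (G.neighborSet v).ncard

/-!
Fix a vertex `c` and consider the radii `R, 8R, 64R, …`. Since `4 · 8^i R = (8^(i+1) R) / 2`,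
passing from radius `r / 2` to `4r` at one scale is passing to the next scale. The product of the
cardinality and the volume of the ball is at most `n ^ 3`, so along `3 / ε` scales it cannot grow by
more than `n ^ ε` every time; at a scale where it does not, neither factor does, because both are
monotone. (This needs positive volumes; an isolated vertex is its own ball at every radius.) Assign
such a radius to every vertex. For each of the `O(1 / ε)` radii, choose a maximal family of vertices
with that radius whose half-balls are disjoint: the full balls cover these vertices, and the
half-balls have total size at most `n` and total volume at most `2m`.
-/

section VertexWeight

variable {V : Type*}

/-- The total weight of a set of vertices. It gives cardinality (weight `1`) and volume (the degrees
as weights) a common treatment. -/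
noncomputable def vertexWeight [Finite V] (w : V → ℕ) (S : Set V) : ℕ :=
  ∑ v ∈ S.toFinite.toFinset, w v

theorem vertexWeight_one [Finite V] (S : Set V) : vertexWeight 1 S = S.ncard := by
  simp [vertexWeight, Set.ncard_eq_toFinset_card S]

theorem vertexWeight_mono [Finite V] (w : V → ℕ) : Monotone (vertexWeight w) := fun _ _ h =>
  Finset.sum_le_sum_of_subset (Set.Finite.toFinset_mono h)

theorem le_vertexWeight_of_mem [Finite V] (w : V → ℕ) {S : Set V} {v : V} (hv : v ∈ S) :
    w v ≤ vertexWeight w S :=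
  Finset.single_le_sum (f := w) (fun _ _ => Nat.zero_le _) (by simpa using hv)

theorem vertexWeight_le_sum [Fintype V] (w : V → ℕ) (S : Set V) :
    vertexWeight w S ≤ ∑ v, w v :=
  Finset.sum_le_sum_of_subset (Finset.subset_univ _)

theorem sum_vertexWeight_le_of_pairwiseDisjoint {ι : Type*} [Fintype V] (w : V → ℕ)
    {T : Finset ι} {A : ι → Set V} (hA : (T : Set ι).PairwiseDisjoint A) :
    ∑ t ∈ T, vertexWeight w (A t) ≤ ∑ v, w v := by
  classical
  have hdisj : (T : Set ι).PairwiseDisjoint fun t => (A t).toFinite.toFinset :=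
    fun t ht u hu htu => Set.Finite.disjoint_toFinset.2 (hA ht hu htu)
  simp only [vertexWeight]
  rw [← Finset.sum_biUnion hdisj]
  exact Finset.sum_le_sum_of_subset (Finset.subset_univ _)

end VertexWeight

section Degree

theorem gvol_eq_vertexWeight {V : Type} [Fintype V] (G : SimpleGraph V) (S : Set V) :
    gvol G S = vertexWeight (fun v => (G.neighborSet v).ncard) S :=
  rfl

variable {V : Type*} [Fintype V] (G : SimpleGraph V)

theorem sum_ncard_neighborSet : ∑ v, (G.neighborSet v).ncard = 2 * G.edgeSet.ncard := by
  classical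
  simpa only [Set.ncard_eq_toFinset_card', SimpleGraph.edgeFinset, SimpleGraph.neighborFinset,
    ← SimpleGraph.card_neighborFinset_eq_degree] using G.sum_degrees_eq_twice_card_edges

theorem sum_ncard_neighborSet_le_sq :
    ∑ v, (G.neighborSet v).ncard ≤ Fintype.card V ^ 2 := by
  have hdeg : ∀ v, (G.neighborSet v).ncard ≤ Fintype.card V := fun v =>
    Nat.card_eq_fintype_card (α := V) ▸ Set.ncard_le_card _
  simpa [sq] using Finset.sum_le_card_nsmul Finset.univ _ _ fun v _ => hdeg v

end Degree

section Ball

variable {V : Type} (G : SimpleGraph V)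

theorem gball_mono (c : V) : Monotone (gball G c) := fun _ _ h _ hv =>
  le_trans (α := ℕ∞) hv (Nat.cast_le.2 h)

theorem mem_gball_self (c : V) (r : ℕ) : c ∈ gball G c r := by
  simp [gball]

variable {G}

theorem mem_gball_add_of_inter_nonempty {a b : V} {r s : ℕ}
    (h : (gball G a r ∩ gball G b s).Nonempty) : a ∈ gball G b (s + r) := by
  obtain ⟨x, hax, hbx⟩ := h
  calc G.edist b a ≤ G.edist b x + G.edist x a := SimpleGraph.edist_triangle
    _ ≤ s + r := add_le_add hbx (SimpleGraph.edist_comm.trans_le hax)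
    _ = ((s + r : ℕ) : ℕ∞) := (Nat.cast_add s r).symm

theorem gball_eq_singleton_of_isIsolated {c : V} (hc : G.IsIsolated c) (r : ℕ) :
    gball G c r = {c} := by
  refine Set.eq_singleton_iff_unique_mem.2 ⟨mem_gball_self G c r, fun v hv => ?_⟩
  by_contra hne
  have hreach : G.Reachable c v :=
    SimpleGraph.reachable_of_edist_ne_top (ne_top_of_le_ne_top (ENat.natCast_ne_top r) hv)
  exact G.neighborSet_nonempty.1 (hreach.nonempty_neighborSet_left (Ne.symm hne)) hc

end Ball

section Covering

variable {V : Type} (G : SimpleGraph V)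

theorem exists_packing_covering (S : Set V) (r : ℕ) :
    ∃ T ⊆ S, T.PairwiseDisjoint (fun c => gball G c (r / 2)) ∧
      ∀ v ∈ S, ∃ c ∈ T, v ∈ gball G c r := by
  obtain ⟨T, hTS, hdisj, hmeet⟩ := Vitali.exists_disjoint_subfamily_covering_enlargement
    (fun c => gball G c (r / 2)) S 0 2 one_lt_two (fun _ _ => le_rfl) 0 (fun _ _ => le_rfl)
    fun c _ => ⟨c, mem_gball_self G c _⟩
  refine ⟨T, hTS, hdisj, fun v hv => ?_⟩
  obtain ⟨c, hc, hvc, -⟩ := hmeet v hv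
  exact ⟨c, hc, gball_mono G c (by lia) (mem_gball_add_of_inter_nonempty hvc)⟩

theorem exists_covering_sum_vertexWeight_le [Fintype V] {ρ : V → ℕ} {L : Finset ℕ}
    (hρ : ∀ v, ρ v ∈ L) :
    ∃ T : Finset V, (∀ v, ∃ c ∈ T, v ∈ gball G c (ρ c)) ∧
      ∀ w : V → ℕ, ∑ c ∈ T, vertexWeight w (gball G c (ρ c / 2)) ≤ L.card * ∑ v, w v := by
  classical
  choose T hT hdisj hcover using fun r => exists_packing_covering G {v | ρ v = r} r
  refine ⟨({c | c ∈ T (ρ c)} : Finset V), fun v => ?_, fun w => ?_⟩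
  · obtain ⟨c, hc, hv⟩ := hcover (ρ v) v rfl
    have hcv : ρ c = ρ v := hT _ hc
    exact ⟨c, by simpa [hcv] using hc, hcv ▸ hv⟩
  · rw [← Finset.sum_fiberwise_of_maps_to fun c _ => hρ c, ← smul_eq_mul]
    refine Finset.sum_le_card_nsmul L _ _ fun r _ => ?_
    refine sum_vertexWeight_le_of_pairwiseDisjoint w fun c hc d hd hcd => ?_
    obtain ⟨hcT, rfl⟩ : c ∈ T (ρ c) ∧ ρ c = r := by simpa using hc
    obtain ⟨hdT, hdc⟩ : d ∈ T (ρ d) ∧ ρ d = ρ c := by simpa using hd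
    simpa [Function.onFun, hdc] using hdisj (ρ c) hcT (hdc ▸ hdT) hcd

end Covering

section Growth

theorem exists_le_mul_of_le_pow {u : ℕ → ℝ} {q : ℝ} {K : ℕ} (hq : 0 ≤ q) (h0 : 1 ≤ u 0)
    (hK : u (K + 1) ≤ q ^ (K + 1)) : ∃ i ≤ K, u (i + 1) ≤ q * u i := by
  by_contra! hgrow
  have hlt : q ^ (K + 1) * u 0 < u (K + 1) :=
    geom_lt hq K.succ_pos fun i hi => hgrow i (Nat.le_of_lt_succ hi)
  exact hK.not_gt ((le_mul_of_one_le_right (by positivity) h0).trans_lt hlt)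

theorem exists_le_mul_and_le_mul {f g : ℕ → ℝ} {q : ℝ} {K : ℕ} (hq : 0 ≤ q) (hf : Monotone f)
    (hg : Monotone g) (hf0 : 1 ≤ f 0) (hg0 : 1 ≤ g 0) (hK : f (K + 1) * g (K + 1) ≤ q ^ (K + 1)) :
    ∃ i ≤ K, f (i + 1) ≤ q * f i ∧ g (i + 1) ≤ q * g i := by
  have hfpos (i : ℕ) : 0 < f i := one_pos.trans_le (hf0.trans (hf i.zero_le))
  have hgpos (i : ℕ) : 0 < g i := one_pos.trans_le (hg0.trans (hg i.zero_le))
  obtain ⟨i, hi, hfg⟩ := exists_le_mul_of_le_pow (u := fun i => f i * g i) hq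
    (one_le_mul_of_one_le_of_one_le hf0 hg0) hK
  refine ⟨i, hi, le_of_mul_le_mul_right ?_ (hgpos i), le_of_mul_le_mul_right ?_ (hfpos i)⟩
  · calc f (i + 1) * g i ≤ f (i + 1) * g (i + 1) :=
          mul_le_mul_of_nonneg_left (hg i.le_succ) (hfpos _).le
      _ ≤ q * f i * g i := hfg.trans_eq (mul_assoc ..).symm
  · calc g (i + 1) * f i ≤ g (i + 1) * f (i + 1) :=
          mul_le_mul_of_nonneg_left (hf i.le_succ) (hgpos _).le
      _ ≤ q * g i * f i := by linarith

/-- Passing from radius `r / 2` to radius `4 * r` increases the `w`-weight of the ball around `c` by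
a factor of at most `q`. -/
def BallGrowthLE {V : Type} [Finite V] (G : SimpleGraph V) (w : V → ℕ) (q : ℝ) (c : V) (r : ℕ) :
    Prop :=
  (vertexWeight w (gball G c (4 * r)) : ℝ) ≤ q * vertexWeight w (gball G c (r / 2))

variable {V : Type} {G : SimpleGraph V} {q : ℝ} {c : V}

theorem exists_ballGrowthLE_and [Fintype V] {w₁ w₂ : V → ℕ} {K : ℕ} (hw₁ : 0 < w₁ c)
    (hw₂ : 0 < w₂ c) (hq : 0 ≤ q)
    (hK : ((∑ v, w₁ v : ℕ) : ℝ) * (∑ v, w₂ v : ℕ) ≤ q ^ (K + 1)) (R : ℕ) :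
    ∃ i ≤ K, BallGrowthLE G w₁ q c (8 ^ i * R) ∧ BallGrowthLE G w₂ q c (8 ^ i * R) := by
  let f (w : V → ℕ) (i : ℕ) : ℝ := vertexWeight w (gball G c (8 ^ i * R / 2))
  have hone {w : V → ℕ} (hw : 0 < w c) : 1 ≤ f w 0 :=
    Nat.one_le_cast.2 (hw.trans_le (le_vertexWeight_of_mem w (mem_gball_self G c _)))
  have hmono (w : V → ℕ) : Monotone (f w) := fun i j hij =>
    Nat.cast_le.2 (vertexWeight_mono w (gball_mono G c (by gcongr; lia)))
  have hle (w : V → ℕ) : f w (K + 1) ≤ (∑ v, w v : ℕ) :=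
    Nat.cast_le.2 (vertexWeight_le_sum w _)
  have hbound : f w₁ (K + 1) * f w₂ (K + 1) ≤ q ^ (K + 1) :=
    (mul_le_mul (hle w₁) (hle w₂) (Nat.cast_nonneg _) (Nat.cast_nonneg _)).trans hK
  have hnext (i : ℕ) : 4 * (8 ^ i * R) = 8 ^ (i + 1) * R / 2 := by
    rw [pow_succ, mul_right_comm]
    lia
  simpa only [BallGrowthLE, hnext] using
    exists_le_mul_and_le_mul hq (hmono w₁) (hmono w₂) (hone hw₁) (hone hw₂) hbound

theorem ballGrowthLE_of_isIsolated [Finite V] (hc : G.IsIsolated c) (w : V → ℕ) (hq : 1 ≤ q)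
    (r : ℕ) : BallGrowthLE G w q c r := by
  rw [BallGrowthLE, gball_eq_singleton_of_isIsolated hc, gball_eq_singleton_of_isIsolated hc]
  exact le_mul_of_one_le_left (Nat.cast_nonneg _) hq

theorem sum_le_of_ballGrowthLE [Finite V] {w : V → ℕ} {ρ : V → ℕ} {T : Finset V} {M : ℝ}
    (hq : 0 ≤ q) (hgrowth : ∀ c ∈ T, BallGrowthLE G w q c (ρ c))
    (hM : ∑ c ∈ T, (vertexWeight w (gball G c (ρ c / 2)) : ℝ) ≤ M) :
    ∑ c ∈ T, (vertexWeight w (gball G c (4 * ρ c)) : ℝ) ≤ q * M :=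
  calc ∑ c ∈ T, (vertexWeight w (gball G c (4 * ρ c)) : ℝ)
      ≤ ∑ c ∈ T, q * (vertexWeight w (gball G c (ρ c / 2)) : ℝ) := Finset.sum_le_sum hgrowth
    _ = q * ∑ c ∈ T, (vertexWeight w (gball G c (ρ c / 2)) : ℝ) := (Finset.mul_sum ..).symm
    _ ≤ q * M := by gcongr

end Growth

section ScaleRadii

/-- The candidate radii `8 ^ i * R` with `i ≤ 3 / ε`, from which each vertex picks its own. -/
noncomputable def scaleRadii (ε : ℝ) (R : ℕ) : Finset ℕ :=
  (Finset.range (⌊3 / ε⌋₊ + 1)).image fun i => 8 ^ i * R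

variable {ε : ℝ} {R r : ℕ}

theorem mem_scaleRadii : r ∈ scaleRadii ε R ↔ ∃ i ≤ ⌊3 / ε⌋₊, 8 ^ i * R = r := by
  simp [scaleRadii]

theorem le_of_mem_scaleRadii (hr : r ∈ scaleRadii ε R) : R ≤ r := by
  obtain ⟨i, -, rfl⟩ := mem_scaleRadii.1 hr
  exact Nat.le_mul_of_pos_left _ (by positivity)

theorem le_two_rpow_mul_of_mem_scaleRadii (hε : 0 < ε) (hr : r ∈ scaleRadii ε R) :
    (r : ℝ) ≤ (2 : ℝ) ^ (10 / ε) * R := by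
  obtain ⟨i, hi, rfl⟩ := mem_scaleRadii.1 hr
  have hi' : (i : ℝ) ≤ 3 / ε := (Nat.le_floor_iff (by positivity)).1 hi
  have hexp : 3 * (i : ℝ) ≤ 10 / ε :=
    calc 3 * (i : ℝ) ≤ 3 * (3 / ε) := by gcongr
      _ = 9 / ε := by ring
      _ ≤ 10 / ε := by gcongr; norm_num
  have hpow : (8 : ℝ) ^ i ≤ (2 : ℝ) ^ (10 / ε) :=
    calc (8 : ℝ) ^ i = (2 : ℝ) ^ (3 * (i : ℝ)) := by
          rw [Real.rpow_mul zero_le_two, Real.rpow_natCast]; norm_num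
      _ ≤ (2 : ℝ) ^ (10 / ε) := Real.rpow_le_rpow_of_exponent_le one_le_two hexp
  push_cast
  gcongr

theorem card_scaleRadii_le (hε : 0 < ε) (hε1 : ε ≤ 1) : ((scaleRadii ε R).card : ℝ) ≤ 4 / ε :=
  calc ((scaleRadii ε R).card : ℝ) ≤ ⌊3 / ε⌋₊ + 1 := by
        exact_mod_cast Finset.card_image_le.trans_eq (Finset.card_range _)
    _ ≤ 3 / ε + 1 / ε := add_le_add (Nat.floor_le (by positivity)) ((one_le_div hε).2 hε1)
    _ = 4 / ε := by ring

theorem pow_le_rpow_pow_floor_add_one {x : ℝ} (hx : 1 ≤ x) (hε : 0 < ε) (k : ℕ) :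
    x ^ k ≤ (x ^ ε) ^ (⌊k / ε⌋₊ + 1) := by
  have hexp : (k : ℝ) ≤ ε * (⌊k / ε⌋₊ + 1 : ℕ) := by
    rw [mul_comm, ← div_le_iff₀ hε]
    exact_mod_cast (Nat.lt_floor_add_one (k / ε)).le
  rw [← Real.rpow_natCast x k, ← Real.rpow_mul_natCast (by positivity)]
  exact Real.rpow_le_rpow_of_exponent_le hx hexp

theorem exists_mem_scaleRadii_ballGrowthLE {V : Type} [Fintype V] (G : SimpleGraph V)
    (hε : 0 < ε) (R : ℕ) (c : V) :
    ∃ r ∈ scaleRadii ε R, BallGrowthLE G 1 (Fintype.card V ^ ε) c r ∧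
      BallGrowthLE G (fun v => (G.neighborSet v).ncard) (Fintype.card V ^ ε) c r := by
  have hn : (1 : ℝ) ≤ Fintype.card V := Nat.one_le_cast.2 (Fintype.card_pos_iff.2 ⟨c⟩)
  by_cases hc : G.IsIsolated c
  · have hq : 1 ≤ (Fintype.card V : ℝ) ^ ε := Real.one_le_rpow hn hε.le
    exact ⟨8 ^ 0 * R, mem_scaleRadii.2 ⟨0, Nat.zero_le _, rfl⟩,
      ballGrowthLE_of_isIsolated hc _ hq _, ballGrowthLE_of_isIsolated hc _ hq _⟩
  · have hdeg : 0 < (G.neighborSet c).ncard :=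
      (Set.ncard_pos (Set.toFinite _)).2 (G.neighborSet_nonempty.2 hc)
    have htotal : (∑ v : V, (1 : V → ℕ) v) * ∑ v, (G.neighborSet v).ncard ≤ Fintype.card V ^ 3 := by
      simpa [pow_succ'] using Nat.mul_le_mul_left (Fintype.card V) (sum_ncard_neighborSet_le_sq G)
    obtain ⟨i, hi, hgrowth⟩ := exists_ballGrowthLE_and (G := G) (w₁ := 1) one_pos hdeg
      (by positivity) (le_trans (mod_cast htotal) (pow_le_rpow_pow_floor_add_one hn hε 3)) R
    exact ⟨8 ^ i * R, mem_scaleRadii.2 ⟨i, hi, rfl⟩, hgrowth⟩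

end ScaleRadii

theorem clustering_general {V : Type} [Fintype V] (G : SimpleGraph V) {ε : ℝ} (hε : 0 < ε)
    (hε1 : ε ≤ 1) (R : ℕ) :
    ∃ B : Finset (V × ℕ),
      (∀ p ∈ B, R ≤ p.2 ∧ (p.2 : ℝ) ≤ (2 : ℝ) ^ ((10 : ℝ) / ε) * (R : ℝ)) ∧
      (∀ v : V, ∃ p ∈ B, v ∈ gball G p.1 p.2) ∧
      (∑ p ∈ B, ((gball G p.1 (p.2 / 2)).ncard : ℝ)) ≤ 8 * (Fintype.card V : ℝ) / ε ∧
      (∀ p ∈ B, ((gball G p.1 (4 * p.2)).ncard : ℝ) ≤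
        (Fintype.card V : ℝ) ^ ε * ((gball G p.1 (p.2 / 2)).ncard : ℝ)) ∧
      (∑ p ∈ B, (gvol G (gball G p.1 (4 * p.2)) : ℝ)) ≤
        8 * (G.edgeSet.ncard : ℝ) * (Fintype.card V : ℝ) ^ ε / ε := by
  classical
  choose ρ hρ hcard hvol using exists_mem_scaleRadii_ballGrowthLE G hε R
  obtain ⟨T, hcover, hsum⟩ := exists_covering_sum_vertexWeight_le G hρ
  have hhalf (w : V → ℕ) : ∑ c ∈ T, (vertexWeight w (gball G c (ρ c / 2)) : ℝ) ≤
      4 / ε * (∑ v, w v : ℕ) :=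
    calc ∑ c ∈ T, (vertexWeight w (gball G c (ρ c / 2)) : ℝ)
        ≤ (scaleRadii ε R).card * (∑ v, w v : ℕ) := mod_cast hsum w
      _ ≤ 4 / ε * (∑ v, w v : ℕ) := by gcongr; exact card_scaleRadii_le hε hε1
  have hinj : Set.InjOn (fun c => (c, ρ c)) T := fun _ _ _ _ h => (Prod.mk.inj h).1
  refine ⟨T.image fun c => (c, ρ c), Finset.forall_mem_image.2 fun c _ => ?_, fun v => ?_, ?_,
    Finset.forall_mem_image.2 fun c _ => ?_, ?_⟩
  · exact ⟨le_of_mem_scaleRadii (hρ c), le_two_rpow_mul_of_mem_scaleRadii hε (hρ c)⟩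
  · obtain ⟨c, hc, hv⟩ := hcover v
    exact ⟨(c, ρ c), Finset.mem_image_of_mem _ hc, hv⟩
  · rw [Finset.sum_image hinj]
    calc ∑ c ∈ T, ((gball G c (ρ c / 2)).ncard : ℝ) ≤ 4 / ε * Fintype.card V := by
          simpa [vertexWeight_one] using hhalf 1
      _ = 4 * Fintype.card V / ε := by ring
      _ ≤ 8 * Fintype.card V / ε := by gcongr; norm_num
  · simpa only [BallGrowthLE, vertexWeight_one] using hcard c
  · simp only [Finset.sum_image hinj, gvol_eq_vertexWeight]
    refine (sum_le_of_ballGrowthLE (by positivity) (fun c _ => hvol c) (hhalf _)).trans_eq ?_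
    rw [sum_ncard_neighborSet]
    push_cast
    ring

/-- **Clustering.** There is an absolute constant `C` such that: for every
connected finite simple graph `G` on `n` vertices and `m` edges, every
`0 < ε ≤ 1` and every positive integer `R`, there is a finite collection `B`
of balls (given as center–radius pairs `(c, r)`) such that: every radius
satisfies `R ≤ r ≤ 2^(10/ε) · R`; the balls cover all vertices;
`Σ |ball(c, r/2)| ≤ C·n/ε`; each ball satisfies
`|ball(c, 4r)| ≤ n^ε · |ball(c, r/2)|`; and
`Σ vol(ball(c, 4r)) ≤ C · m · n^ε / ε`. -/
theorem clustering :
    ∃ C : ℝ, 0 < C ∧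
      ∀ (V : Type) [Fintype V] (G : SimpleGraph V), G.Connected →
        ∀ ε : ℝ, 0 < ε → ε ≤ 1 → ∀ R : ℕ, 0 < R →
          ∃ B : Finset (V × ℕ),
            (∀ p ∈ B, R ≤ p.2 ∧ (p.2 : ℝ) ≤ (2 : ℝ) ^ ((10 : ℝ) / ε) * (R : ℝ)) ∧
            (∀ v : V, ∃ p ∈ B, v ∈ gball G p.1 p.2) ∧
            (∑ p ∈ B, ((gball G p.1 (p.2 / 2)).ncard : ℝ)) ≤
              C * (Fintype.card V : ℝ) / ε ∧
            (∀ p ∈ B, ((gball G p.1 (4 * p.2)).ncard : ℝ) ≤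
              (Fintype.card V : ℝ) ^ ε * ((gball G p.1 (p.2 / 2)).ncard : ℝ)) ∧
            (∑ p ∈ B, (gvol G (gball G p.1 (4 * p.2)) : ℝ)) ≤
              C * (G.edgeSet.ncard : ℝ) * (Fintype.card V : ℝ) ^ ε / ε :=
  ⟨8, by norm_num, fun _ _ G _ _ hε hε1 R _ => clustering_general G hε hε1 R⟩
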